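/- Let K be a field, n ≥ 2, and let f(x_1,…,x_m) be a multilinear polynomial over K. Then f does not satisfy (S1) if and only if the K-linear span of Im(f) on M_n(K) contains sl_n(K). -/

import Mathlib

/-- Evaluation of the multilinear polynomial `f(x₁,…,x_m) = ∑_{σ ∈ S_m} α_σ x_{σ(1)}⋯x_{σ(m)}`
given by coefficients `α` at the tuple `a`. -/
def mlEval {K A : Type} [Field K] [Ring A] [Algebra K A] {m : ℕ}
    (α : Equiv.Perm (Fin m) → K) (a : Fin m → A) : A :=
  ∑ σ : Equiv.Perm (Fin m), α σ • (List.ofFn fun i => a (σ i)).prod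

/-- The image of the multilinear polynomial with coefficients `α` on the algebra `A`. -/
def mlImage {K A : Type} [Field K] [Ring A] [Algebra K A] {m : ℕ}
    (α : Equiv.Perm (Fin m) → K) : Set A :=
  Set.range (mlEval α)

/-- `a` is homogeneous of degree `g` in the Vasilovsky `ZMod n`-grading of `Mₙ(K)`:
`a` lies in the span of the matrix units `E i j` with `j - i ≡ g (mod n)`. -/
def VasHomog {K : Type} [Field K] {n : ℕ} (g : ZMod n)
    (a : Matrix (Fin n) (Fin n) K) : Prop :=
  ∀ i j : Fin n, ((j.val : ZMod n) - (i.val : ZMod n)) ≠ g → a i j = 0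

/-- Statement (S0): `f` vanishes on homogeneous tuples whose degrees sum to `0`. -/
def StmtS0 {K : Type} [Field K] (n : ℕ) {m : ℕ} (α : Equiv.Perm (Fin m) → K) : Prop :=
  ∀ (g : Fin m → ZMod n) (a : Fin m → Matrix (Fin n) (Fin n) K),
    (∀ i, VasHomog (g i) (a i)) → (∑ i, g i) = 0 → mlEval α a = 0

/-- Statement (S1): `f` vanishes on homogeneous tuples whose degrees sum to a nonzero element. -/
def StmtS1 {K : Type} [Field K] (n : ℕ) {m : ℕ} (α : Equiv.Perm (Fin m) → K) : Prop :=
  ∀ (g : Fin m → ZMod n) (a : Fin m → Matrix (Fin n) (Fin n) K),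
    (∀ i, VasHomog (g i) (a i)) → (∑ i, g i) ≠ 0 → mlEval α a = 0

/-- Statement (S2): `f` has trace-zero values on homogeneous tuples whose degrees sum to `0`. -/
def StmtS2 {K : Type} [Field K] (n : ℕ) {m : ℕ} (α : Equiv.Perm (Fin m) → K) : Prop :=
  ∀ (g : Fin m → ZMod n) (a : Fin m → Matrix (Fin n) (Fin n) K),
    (∀ i, VasHomog (g i) (a i)) → (∑ i, g i) = 0 → Matrix.trace (mlEval α a) = 0

/-- The set of scalar matrices in `Mₙ(K)`. -/
def scalarSet (K : Type) [Field K] (n : ℕ) : Set (Matrix (Fin n) (Fin n) K) :=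
  {b | ∃ c : K, b = c • (1 : Matrix (Fin n) (Fin n) K)}

/-- The set `slₙ(K)` of trace-zero matrices in `Mₙ(K)`. -/
def slSet (K : Type) [Field K] (n : ℕ) : Set (Matrix (Fin n) (Fin n) K) :=
  {b | Matrix.trace b = 0}

/-!
Write `V` for the span of the image of `f`, which by multilinearity is already spanned by the
values of `f` at tuples of matrix units. Such a value is homogeneous for the `ℤⁿ`-grading in which
`E i j` has degree `eⱼ - eᵢ`. The component of degree `e_q - e_p` with `p ≠ q` is the line through
`E p q`, so as soon as some element of `V` has a nonzero off-diagonal entry, `V` contains some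
`E p q` with `p ≠ q`. Being stable under automorphisms of the matrix algebra, `V` then contains
every off-diagonal matrix unit (permute the indices) and every `E k k - E l l` (conjugate by a
transvection), hence all of `slₙ(K)`. Finally, a nonzero off-diagonal entry amounts to a nonzero
component of nonzero degree in the Vasilovsky grading, which is what the failure of (S1) provides.
-/

open Matrix

section ElementaryGrading

variable {R ι G : Type*} [Semiring R] [AddCommGroup G]

/-- The homogeneous component of degree `g` of the elementary grading of the matrix ring induced by
the weights `w`: the entry `(i, j)` is given the degree `w j - w i`. The Vasilovsky grading and the
grading by the root lattice of type `A` are both of this form. -/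
def elementaryComponent (w : ι → G) (g : G) : Submodule R (Matrix ι ι R) where
  carrier := {x | ∀ i j, w j - w i ≠ g → x i j = 0}
  zero_mem' := fun _ _ _ => rfl
  add_mem' hx hy i j h := by simp [hx i j h, hy i j h]
  smul_mem' c x hx i j h := by simp [hx i j h]

lemma sub_eq_of_mem_elementaryComponent {w : ι → G} {g : G} {x : Matrix ι ι R}
    (hx : x ∈ elementaryComponent w g) {i j : ι} (hij : x i j ≠ 0) : w j - w i = g :=
  not_imp_comm.mp (hx i j) hij

variable [DecidableEq ι]

lemma single_mem_elementaryComponent (w : ι → G) (i j : ι) (c : R) :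
    single i j c ∈ elementaryComponent w (w j - w i) := by
  intro k l hkl
  refine single_apply_of_ne _ _ _ _ _ ?_
  rintro ⟨rfl, rfl⟩
  exact hkl rfl

instance elementaryComponent.gradedMonoid [Fintype ι] (w : ι → G) :
    SetLike.GradedMonoid (elementaryComponent (R := R) w) where
  one_mem i j hij := one_apply_ne (by rintro rfl; exact hij (sub_self _))
  mul_mem g h x y hx hy i j hij := by
    rw [mul_apply]
    refine Finset.sum_eq_zero fun k _ => ?_
    by_contra hk
    have hik := sub_eq_of_mem_elementaryComponent hx (left_ne_zero_of_mul hk)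
    have hkj := sub_eq_of_mem_elementaryComponent hy (right_ne_zero_of_mul hk)
    exact hij (by rw [← hik, ← hkj]; abel)

lemma piSingle_sub_piSingle_inj {i j p q : ι} (hpq : p ≠ q)
    (h : (Pi.single j 1 - Pi.single i 1 : ι → ℤ) = Pi.single q 1 - Pi.single p 1) :
    i = p ∧ j = q := by
  have hp := congrFun h p
  have hq := congrFun h q
  simp only [Pi.sub_apply, Pi.single_apply] at hp hq
  grind

lemma eq_single_of_mem_elementaryComponent_piSingle {g : ι → ℤ} {x : Matrix ι ι R}
    (hx : x ∈ elementaryComponent (fun i => (Pi.single i 1 : ι → ℤ)) g) {p q : ι} (hpq : p ≠ q)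
    (hxpq : x p q ≠ 0) : x = single p q (x p q) := by
  ext i j
  by_cases hij : x i j = 0
  · rw [single_apply]
    split_ifs with h
    · rw [h.1, h.2]
    · exact hij
  · obtain ⟨rfl, rfl⟩ := piSingle_sub_piSingle_inj hpq
      ((sub_eq_of_mem_elementaryComponent hx hij).trans
        (sub_eq_of_mem_elementaryComponent hx hxpq).symm)
    rw [single_apply_same]

end ElementaryGrading

lemma mem_of_trace_eq_zero_of_single_mem {R ι : Type*} [Ring R] [Fintype ι] [DecidableEq ι]
    {V : Submodule R (Matrix ι ι R)}
    (h_off : ∀ i j, i ≠ j → single i j 1 ∈ V)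
    (h_diag : ∀ i j, single i i 1 - single j j 1 ∈ V)
    {x : Matrix ι ι R} (hx : x.trace = 0) : x ∈ V := by
  cases isEmpty_or_nonempty ι
  · simp [Subsingleton.elim x 0]
  let z : ι := Classical.arbitrary ι
  have hmk_off : ∀ i j, i ≠ j → V.mkQ (single i j 1) = 0 := fun i j hij =>
    (Submodule.Quotient.mk_eq_zero V).mpr (h_off i j hij)
  have hmk_diag : ∀ i, V.mkQ (single i i 1) = V.mkQ (single z z 1) := fun i =>
    (Submodule.Quotient.eq V).mpr (h_diag i z)
  rw [← Submodule.Quotient.mk_eq_zero V, ← Submodule.mkQ_apply]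
  calc V.mkQ x = ∑ i, ∑ j, x i j • V.mkQ (single i j 1) := by
        conv_lhs => rw [matrix_eq_sum_single x]
        simp only [map_sum, ← map_smul, smul_single, smul_eq_mul, mul_one]
    _ = ∑ i, x i i • V.mkQ (single i i 1) := Finset.sum_congr rfl fun i _ =>
        Finset.sum_eq_single_of_mem i (Finset.mem_univ i) fun j _ hji => by
          rw [hmk_off i j hji.symm, smul_zero]
    _ = x.trace • V.mkQ (single z z 1) := by
        simp only [hmk_diag, ← Finset.sum_smul, trace, diag_apply]
    _ = 0 := by rw [hx, zero_smul]

section AutomorphismStable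

variable {R ι : Type*} [CommRing R] [Fintype ι] [DecidableEq ι]

lemma transvection_mul_single_mul_transvection_neg (k l : ι) :
    transvection k l (1 : R) * single l k 1 * transvection k l (-1) =
      single l k 1 + (single k k 1 - single l l 1) - single k l 1 := by
  simp only [transvection, ← single_neg, add_mul, mul_add, one_mul, mul_one, mul_neg,
    single_mul_single_same]
  abel

variable {V : Submodule R (Matrix ι ι R)}
  (hV : ∀ φ : Matrix ι ι R ≃ₐ[R] Matrix ι ι R, ∀ x ∈ V, φ x ∈ V)

include hV

lemma single_mem_of_forall_algEquiv_mem {p q : ι} (hpq : p ≠ q) (hmem : single p q 1 ∈ V)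
    {k l : ι} (hkl : k ≠ l) : single k l 1 ∈ V := by
  obtain ⟨e, rfl, rfl⟩ : ∃ e : Equiv.Perm ι, e p = k ∧ e q = l :=
    MulAction.is_two_pretransitive_iff.mp (Equiv.Perm.isMultiplyPretransitive ι 2) hpq hkl
  simpa using hV (reindexAlgEquiv R R e) _ hmem

lemma single_sub_single_mem_of_forall_algEquiv_mem
    (h_off : ∀ i j, i ≠ j → single i j 1 ∈ V) (k l : ι) :
    single k k 1 - single l l 1 ∈ V := by
  obtain rfl | hkl := eq_or_ne k l
  · simp
  let u : (Matrix ι ι R)ˣ :=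
    { val := transvection k l 1
      inv := transvection k l (-1)
      val_inv := by simp [transvection_mul_transvection_same, hkl]
      inv_val := by simp [transvection_mul_transvection_same, hkl] }
  have hconj : single l k 1 + (single k k 1 - single l l 1) - single k l 1 ∈ V := by
    rw [← transvection_mul_single_mul_transvection_neg k l]
    exact hV (MulSemiringAction.toAlgEquiv R _ (ConjAct.toConjAct u)) _ (h_off l k hkl.symm)
  rwa [V.sub_mem_iff_left (h_off k l hkl), V.add_mem_iff_right (h_off l k hkl.symm)] at hconj

theorem mem_of_forall_algEquiv_mem_of_trace_eq_zero {p q : ι} (hpq : p ≠ q)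
    (hmem : single p q 1 ∈ V) {x : Matrix ι ι R} (hx : x.trace = 0) : x ∈ V := by
  have h_off : ∀ i j, i ≠ j → single i j 1 ∈ V := fun _ _ =>
    single_mem_of_forall_algEquiv_mem hV hpq hmem
  exact mem_of_trace_eq_zero_of_single_mem h_off
    (single_sub_single_mem_of_forall_algEquiv_mem hV h_off) hx

end AutomorphismStable

lemma span_range_multilinearMap_eq_span_range_basis {R M N κ ι : Type*} [CommSemiring R]
    [AddCommMonoid M] [AddCommMonoid N] [Module R M] [Module R N] [Finite κ] [Finite ι]
    (f : MultilinearMap R (fun _ : κ => M) N) (b : Module.Basis ι R M) :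
    Submodule.span R (Set.range f) =
      Submodule.span R (Set.range fun r : κ → ι => f fun k => b (r k)) := by
  classical
  cases nonempty_fintype κ
  cases nonempty_fintype ι
  refine le_antisymm (Submodule.span_le.mpr ?_) (Submodule.span_mono ?_)
  · rintro _ ⟨v, rfl⟩
    have hv : v = fun k => ∑ i, b.repr (v k) i • b i := funext fun k => (b.sum_repr (v k)).symm
    rw [hv, f.map_sum]
    refine Submodule.sum_mem _ fun r _ => ?_
    rw [f.map_smul_univ]
    exact Submodule.smul_mem _ _ (Submodule.subset_span ⟨r, rfl⟩)
  · rintro _ ⟨r, rfl⟩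
    exact ⟨_, rfl⟩

section MlEval

variable {K A B : Type} [Field K] [Ring A] [Algebra K A] [Ring B] [Algebra K B] {m : ℕ}

/-- The evaluation of a multilinear polynomial, bundled as a multilinear map. -/
def mlEvalMultilinearMap (α : Equiv.Perm (Fin m) → K) : MultilinearMap K (fun _ : Fin m => A) A :=
  ∑ σ : Equiv.Perm (Fin m), α σ • (MultilinearMap.mkPiAlgebraFin K m A).domDomCongr σ

lemma coe_mlEvalMultilinearMap (α : Equiv.Perm (Fin m) → K) :
    ⇑(mlEvalMultilinearMap (A := A) α) = mlEval α := by
  ext a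
  simp [mlEvalMultilinearMap, mlEval]

lemma map_mlEval (φ : A →ₐ[K] B) (α : Equiv.Perm (Fin m) → K) (a : Fin m → A) :
    φ (mlEval α a) = mlEval α fun i => φ (a i) := by
  simp [mlEval, map_list_prod, List.map_ofFn, Function.comp_def]

lemma map_mem_span_mlImage (φ : A →ₐ[K] B) {α : Equiv.Perm (Fin m) → K} {x : A}
    (hx : x ∈ Submodule.span K (mlImage α)) : φ x ∈ Submodule.span K (mlImage α) := by
  suffices h : Submodule.span K (mlImage α) ≤
      (Submodule.span K (mlImage α)).comap φ.toLinearMap from h hx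
  rw [Submodule.span_le]
  rintro _ ⟨a, rfl⟩
  exact Submodule.subset_span ⟨_, (map_mlEval φ α a).symm⟩

lemma mlEval_mem_graded {G : Type*} [AddCommMonoid G] (𝒜 : G → Submodule K A)
    [SetLike.GradedMonoid 𝒜] (α : Equiv.Perm (Fin m) → K) {g : Fin m → G} {a : Fin m → A}
    (ha : ∀ i, a i ∈ 𝒜 (g i)) : mlEval α a ∈ 𝒜 (∑ i, g i) := by
  refine Submodule.sum_mem _ fun σ _ => Submodule.smul_mem _ _ ?_
  rw [← Equiv.sum_comp σ g, ← List.sum_ofFn]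
  exact SetLike.list_prod_ofFn_mem_graded _ _ fun i => ha (σ i)

end MlEval

section MatrixUnits

variable {K ι : Type} [Field K] [Fintype ι] [DecidableEq ι] {m : ℕ}

lemma span_mlImage_eq_span_range_single (α : Equiv.Perm (Fin m) → K) :
    Submodule.span K (mlImage α : Set (Matrix ι ι K)) =
      Submodule.span K (Set.range fun r : Fin m → ι × ι =>
        mlEval α fun k => single (r k).1 (r k).2 1) := by
  have hbasis : ∀ ij : ι × ι, stdBasis K ι ι ij = single ij.1 ij.2 1 := fun ij =>
    stdBasis_eq_single K ij.1 ij.2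
  simpa only [mlImage, coe_mlEvalMultilinearMap, hbasis] using
    span_range_multilinearMap_eq_span_range_basis (mlEvalMultilinearMap α) (stdBasis K ι ι)

lemma exists_mlEval_single_apply_ne_zero {α : Equiv.Perm (Fin m) → K} {x : Matrix ι ι K}
    (hx : x ∈ Submodule.span K (mlImage α)) {p q : ι} (hxpq : x p q ≠ 0) :
    ∃ r : Fin m → ι × ι, mlEval α (fun k => single (r k).1 (r k).2 (1 : K)) p q ≠ 0 := by
  by_contra! hzero
  suffices h : Submodule.span K (mlImage α) ≤ LinearMap.ker (entryLinearMap K K p q) from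
    hxpq (h hx)
  rw [span_mlImage_eq_span_range_single, Submodule.span_le]
  rintro _ ⟨r, rfl⟩
  exact hzero r

lemma single_mem_span_mlImage {α : Equiv.Perm (Fin m) → K} {x : Matrix ι ι K}
    (hx : x ∈ Submodule.span K (mlImage α)) {p q : ι} (hpq : p ≠ q) (hxpq : x p q ≠ 0) :
    single p q (1 : K) ∈ Submodule.span K (mlImage α) := by
  obtain ⟨r, hr⟩ := exists_mlEval_single_apply_ne_zero hx hxpq
  set b := mlEval α fun k => single (r k).1 (r k).2 (1 : K)
  have hb_mem : b ∈ Submodule.span K (mlImage α) := Submodule.subset_span ⟨_, rfl⟩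
  have hb_single : b = single p q (b p q) :=
    eq_single_of_mem_elementaryComponent_piSingle
      (mlEval_mem_graded _ α fun k => single_mem_elementaryComponent _ _ _ _) hpq hr
  rw [hb_single] at hb_mem
  simpa [smul_single, hr] using Submodule.smul_mem _ (b p q)⁻¹ hb_mem

theorem mem_span_mlImage_of_trace_eq_zero {α : Equiv.Perm (Fin m) → K} {x : Matrix ι ι K}
    (hx : x ∈ Submodule.span K (mlImage α)) {p q : ι} (hpq : p ≠ q) (hxpq : x p q ≠ 0)
    {y : Matrix ι ι K} (hy : y.trace = 0) : y ∈ Submodule.span K (mlImage α) :=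
  mem_of_forall_algEquiv_mem_of_trace_eq_zero
    (fun φ _ => map_mem_span_mlImage φ.toAlgHom) hpq
    (single_mem_span_mlImage hx hpq hxpq) hy

end MatrixUnits

section Vasilovsky

variable {K : Type} [Field K] {n m : ℕ}

lemma vasHomog_iff_mem_elementaryComponent {g : ZMod n} {a : Matrix (Fin n) (Fin n) K} :
    VasHomog g a ↔ a ∈ elementaryComponent (fun i : Fin n => (i.val : ZMod n)) g :=
  Iff.rfl

lemma not_stmtS1_iff_exists_apply_ne_zero {α : Equiv.Perm (Fin m) → K} :
    ¬ StmtS1 n α ↔ ∃ x ∈ Submodule.span K (mlImage α : Set (Matrix (Fin n) (Fin n) K)),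
      ∃ i j, i ≠ j ∧ x i j ≠ 0 := by
  constructor
  · intro hS1
    simp only [StmtS1, not_forall] at hS1
    obtain ⟨g, a, ha, hg, hne⟩ := hS1
    obtain ⟨i, j, hij⟩ : ∃ i j, mlEval α a i j ≠ 0 := by
      by_contra! hzero
      exact hne (Matrix.ext hzero)
    have hdeg := sub_eq_of_mem_elementaryComponent (mlEval_mem_graded _ α fun k =>
      vasHomog_iff_mem_elementaryComponent.mp (ha k)) hij
    refine ⟨_, Submodule.subset_span ⟨a, rfl⟩, i, j, ?_, hij⟩
    rintro rfl
    exact hg (hdeg.symm.trans (sub_self _))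
  · rintro ⟨x, hx, i, j, hij, hxij⟩ hS1
    obtain ⟨r, hr⟩ := exists_mlEval_single_apply_ne_zero hx hxij
    have hhom := fun k => single_mem_elementaryComponent (fun i : Fin n => (i.val : ZMod n))
      (r k).1 (r k).2 (1 : K)
    have hdeg := sub_eq_of_mem_elementaryComponent (mlEval_mem_graded _ α hhom) hr
    have hvas := fun k => vasHomog_iff_mem_elementaryComponent.mpr (hhom k)
    refine hr (congrFun₂ (hS1 _ _ hvas ?_) i j)
    rw [← hdeg, sub_ne_zero]
    exact fun h => hij (Fin.ext (CharP.natCast_injOn_Iio (ZMod n) n j.is_lt i.is_lt h).symm)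

end Vasilovsky

/-- a multilinear polynomial fails (S1) iff the linear span of its image on
`Mₙ(K)` contains `slₙ(K)`. -/
theorem stmt_6 {K : Type} [Field K] (n : ℕ) (hn : 2 ≤ n) {m : ℕ}
    (α : Equiv.Perm (Fin m) → K) :
    ¬ StmtS1 n α ↔
      slSet K n ⊆ (Submodule.span K (mlImage α : Set (Matrix (Fin n) (Fin n) K)) :
        Set (Matrix (Fin n) (Fin n) K)) := by
  rw [not_stmtS1_iff_exists_apply_ne_zero]
  constructor
  · rintro ⟨x, hx, p, q, hpq, hxpq⟩ y hy
    exact mem_span_mlImage_of_trace_eq_zero hx hpq hxpq hy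
  · intro hsl
    have : Nontrivial (Fin n) := Fin.nontrivial_iff_two_le.mpr hn
    obtain ⟨i, j, hij⟩ := exists_pair_ne (Fin n)
    exact ⟨single i j 1, hsl (trace_single_eq_of_ne i j 1 hij), i, j, hij, by simp⟩
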